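/- arXiv:2204.09584 — 5 statements merged into one kernel-verified Lean document; each statement's English description precedes it below -/
import Mathlib

section
/- Let C be a category and E a class of morphisms of C containing all identity morphisms. Suppose a morphism f : X ⟶ Y of C is equipped with a horizontally natural right E-lifting operation θ. Then for every e : A ⟶ B in E and all u : A ⟶ X, v : B ⟶ Y with u ≫ f = e ≫ v, the morphism θ_e(u,v) is the unique diagonal filler: every t : B ⟶ X satisfying e ≫ t = u and t ≫ f = v is equal to θ_e(u,v). -/
open CategoryTheory

universe v u

/-!
A morphism `t : B ⟶ X` fills the square from `e` to `f` with sides `e ≫ t` and `t ≫ f`, and this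
square factors through the one from `𝟙 X` to `f` with sides `𝟙 X` and `f`. Naturality along
`(e ≫ t, t) : e ⟶ 𝟙 X` shows that the chosen filler is `t` followed by the filler of the latter
square, which the upper triangle law forces to be `𝟙 X`.
-/

/-- The data of a right `E`-lifting operation on `f`: a morphism `B ⟶ X` for every commutative
square from a member `e : A ⟶ B` of `E` to `f : X ⟶ Y`. The triangle laws are not part of the
data, so that naturality can be stated independently of them. -/
abbrev DiagonalOperation {C : Type u} [Category.{v} C] (E : MorphismProperty C) {X Y : C}
    (f : X ⟶ Y) :=
  ∀ ⦃A B : C⦄ (e : A ⟶ B), E e → ∀ (u : A ⟶ X) (v : B ⟶ Y), u ≫ f = e ≫ v → (B ⟶ X)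

namespace DiagonalOperation

variable {C : Type u} [Category.{v} C] {E : MorphismProperty C} {X Y : C} {f : X ⟶ Y}

/-- Horizontal naturality: compatibility of the chosen diagonals with precomposition by
morphisms of arrows `(r₀, r₁) : e ⟶ e'` between members of `E`. -/
def IsHorizontallyNatural (θ : DiagonalOperation E f) : Prop :=
  ∀ ⦃A B A' B' : C⦄ (e : A ⟶ B) (he : E e) (e' : A' ⟶ B') (he' : E e')
    (r₀ : A ⟶ A') (r₁ : B ⟶ B') (_ : r₀ ≫ e' = e ≫ r₁)
    (u : A' ⟶ X) (v : B' ⟶ Y) (h : u ≫ f = e' ≫ v)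
    (h' : (r₀ ≫ u) ≫ f = e ≫ (r₁ ≫ v)),
    θ e he (r₀ ≫ u) (r₁ ≫ v) h' = r₁ ≫ θ e' he' u v h

theorem IsHorizontallyNatural.apply_comp_comp {θ : DiagonalOperation E f}
    (hθ : θ.IsHorizontallyNatural) (hX : E (𝟙 X)) {A B : C} (e : A ⟶ B) (he : E e) (t : B ⟶ X) :
    θ e he (e ≫ t) (t ≫ f) (Category.assoc e t f) = t ≫ θ (𝟙 X) hX (𝟙 X) f rfl := by
  simpa only [Category.comp_id] using
    hθ e he (𝟙 X) hX (e ≫ t) t (Category.comp_id _) (𝟙 X) f rfl (by simp)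

end DiagonalOperation

theorem stmt0_general {C : Type u} [Category.{v} C] {E : MorphismProperty C} {X Y : C}
    {f : X ⟶ Y} (hX : E (𝟙 X)) {θ : DiagonalOperation E f} (hθ : θ.IsHorizontallyNatural)
    (hid : θ (𝟙 X) hX (𝟙 X) f rfl = 𝟙 X) :
    ∀ ⦃A B : C⦄ (e : A ⟶ B) (he : E e) (u : A ⟶ X) (v : B ⟶ Y) (h : u ≫ f = e ≫ v)
      (t : B ⟶ X), e ≫ t = u → t ≫ f = v → t = θ e he u v h := by
  rintro A B e he _ _ - t rfl rfl
  rw [hθ.apply_comp_comp hX, hid, Category.comp_id]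

/-- If a morphism `f : X ⟶ Y` carries a horizontally natural right `E`-lifting
operation `θ`, where `E` contains all identities, then each `θ_e(u,v)` is the *unique*
diagonal filler of the corresponding square. -/
theorem stmt0 {C : Type u} [Category.{v} C] (E : MorphismProperty C)
    (hE : ∀ A : C, E (𝟙 A))
    {X Y : C} (f : X ⟶ Y)
    (θ : ∀ ⦃A B : C⦄ (e : A ⟶ B), E e → ∀ (u : A ⟶ X) (v : B ⟶ Y), u ≫ f = e ≫ v → (B ⟶ X))
    (hθ₁ : ∀ ⦃A B : C⦄ (e : A ⟶ B) (he : E e) (u : A ⟶ X) (v : B ⟶ Y) (h : u ≫ f = e ≫ v),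
      e ≫ θ e he u v h = u)
    (hθ₂ : ∀ ⦃A B : C⦄ (e : A ⟶ B) (he : E e) (u : A ⟶ X) (v : B ⟶ Y) (h : u ≫ f = e ≫ v),
      θ e he u v h ≫ f = v)
    (hnat : ∀ ⦃A B A' B' : C⦄ (e : A ⟶ B) (he : E e) (e' : A' ⟶ B') (he' : E e')
      (r₀ : A ⟶ A') (r₁ : B ⟶ B') (_ : r₀ ≫ e' = e ≫ r₁)
      (u : A' ⟶ X) (v : B' ⟶ Y) (h : u ≫ f = e' ≫ v)
      (h' : (r₀ ≫ u) ≫ f = e ≫ (r₁ ≫ v)),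
      θ e he (r₀ ≫ u) (r₁ ≫ v) h' = r₁ ≫ θ e' he' u v h) :
    ∀ ⦃A B : C⦄ (e : A ⟶ B) (he : E e) (u : A ⟶ X) (v : B ⟶ Y) (h : u ≫ f = e ≫ v)
      (t : B ⟶ X), e ≫ t = u → t ≫ f = v → t = θ e he u v h := by
  have hid : θ (𝟙 X) (hE X) (𝟙 X) f rfl = 𝟙 X := by
    simpa only [Category.id_comp] using hθ₁ (𝟙 X) (hE X) (𝟙 X) f rfl
  exact stmt0_general (hE X) hnat hid
end

section
/- Let A, B, C, D be categories. Let u : A ⥤ B be a functor admitting a left adjoint F : B ⥤ A such that the counit of the adjunction F ⊣ u is the identity natural transformation (in particular u ⋙ F = 𝟭 A), and let g : C ⥤ D be a Grothendieck fibration. Then for all functors r : A ⥤ C and s : B ⥤ D satisfying r ⋙ g = u ⋙ s, there exists a functor k : B ⥤ C with u ⋙ k = r and k ⋙ g = s. -/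
open CategoryTheory

universe v₁ v₂ v₃ v₄ u₁ u₂ u₃ u₄

/-!
Put `t = F ⋙ r`. Since `r ⋙ g = u ⋙ s`, whiskering the unit `η` with `s` gives a natural
transformation `s ⟶ t ⋙ g`. Cartesian lifts of its components assemble, by their universal
property, into a functor `k` over `s` with a natural transformation `k ⟶ t`. The triangle identity
shows that `η` is an identity on the image of `u`; choosing identities as the cartesian lifts there
makes `k` agree strictly with `t`, hence with `r`, along `u`.
-/

open MorphismProperty (identities)

section

variable {A : Type u₁} {B : Type u₂} {C : Type u₃} {D : Type u₄}
  [Category.{v₁} A] [Category.{v₂} B] [Category.{v₃} C] [Category.{v₄} D]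

lemma identities_iff_exists_eq_eqToHom {X Y : C} (f : X ⟶ Y) :
    identities C f ↔ ∃ h : X = Y, f = eqToHom h := by
  constructor
  · rintro ⟨⟩
    exact ⟨rfl, rfl⟩
  · rintro ⟨h, rfl⟩
    exact MorphismProperty.ContainsIdentities.eqToHom _ h

lemma identities_map (G : C ⥤ D) {X Y : C} {f : X ⟶ Y} (hf : identities C f) :
    identities D (G.map f) := by
  obtain ⟨⟩ := hf
  rw [G.map_id]
  exact MorphismProperty.id_mem _ _

lemma identities_of_comp {X Y Z : C} {f : X ⟶ Y} {f' : Y ⟶ Z} (hf' : identities C f')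
    (h : identities C (f ≫ f')) : identities C f := by
  obtain ⟨⟩ := hf'
  rwa [Category.comp_id] at h

lemma identities_unit_app_of_counit_app {u : A ⥤ B} {F : B ⥤ A} (adj : F ⊣ u) {a : A}
    (ha : identities A (adj.counit.app a)) : identities B (adj.unit.app (u.obj a)) := by
  refine identities_of_comp (identities_map u ha) ?_
  rw [adj.right_triangle_components]
  exact MorphismProperty.id_mem _ _

lemma identities_eqToHom_app {G H : A ⥤ C} (h : G = H) (a : A) :
    identities C ((eqToHom h).app a) := by
  subst h
  exact MorphismProperty.id_mem _ _

lemma functor_eq_of_identities_app {G H : A ⥤ C} (α : G ⟶ H)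
    (hα : ∀ a, identities C (α.app a)) : G = H := by
  choose hobj happ using fun a => (identities_iff_exists_eq_eqToHom _).1 (hα a)
  have (a : A) : IsIso (α.app a) := happ a ▸ inferInstance
  have : IsIso α := NatIso.isIso_of_isIso_app α
  exact CategoryTheory.Functor.ext_of_iso (asIso α) hobj happ

lemma exists_isStronglyCartesian_identities (g : C ⥤ D) [g.IsFibered] {c : C} {d : D}
    (f : d ⟶ g.obj c) :
    ∃ (c' : C) (φ : c' ⟶ c),
      g.IsStronglyCartesian f φ ∧ (identities D f → identities C φ) := by
  by_cases hf : identities D f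
  · obtain ⟨⟩ := hf
    exact ⟨c, 𝟙 c, inferInstance, fun _ => MorphismProperty.id_mem _ _⟩
  · obtain ⟨c', φ, _⟩ := Functor.IsPreFibered.exists_isCartesian' f
    exact ⟨c', φ, inferInstance, fun h => absurd h hf⟩

end

section CartesianLift

variable {B : Type u₂} {C : Type u₃} {D : Type u₄}
  [Category.{v₂} B] [Category.{v₃} C] [Category.{v₄} D]
  {g : C ⥤ D} {s : B ⥤ D} {t : B ⥤ C} (η : s ⟶ t ⋙ g)

-- Naturality with `(t ⋙ g).map f` unfolded: only in this form does instance search see that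
-- composites in `C` lift the left-hand side.
lemma app_comp_map_map {b b' : B} (f : b ⟶ b') :
    η.app b ≫ g.map (t.map f) = s.map f ≫ η.app b' :=
  (η.naturality f).symm

variable {K : B → C} (φ : ∀ b, K b ⟶ t.obj b) [∀ b, g.IsStronglyCartesian (η.app b) (φ b)]

/-- The action on morphisms of the functor `cartesianLift`: the morphism over `s.map f` induced by
the universal property of the lift at the target of `f`. -/
noncomputable def cartesianLiftMap {b b' : B} (f : b ⟶ b') : K b ⟶ K b' :=
  Functor.IsStronglyCartesian.map g (η.app b') (φ b') (app_comp_map_map η f) (φ b ≫ t.map f)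

instance cartesianLiftMap_isHomLift {b b' : B} (f : b ⟶ b') :
    g.IsHomLift (s.map f) (cartesianLiftMap η φ f) :=
  Functor.IsStronglyCartesian.map_isHomLift g (η.app b') (φ b') (app_comp_map_map η f) _

lemma cartesianLiftMap_fac {b b' : B} (f : b ⟶ b') :
    cartesianLiftMap η φ f ≫ φ b' = φ b ≫ t.map f :=
  Functor.IsStronglyCartesian.fac g (η.app b') (φ b') (app_comp_map_map η f) _

lemma eq_cartesianLiftMap {b b' : B} (f : b ⟶ b') (χ : K b ⟶ K b') [g.IsHomLift (s.map f) χ]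
    (hχ : χ ≫ φ b' = φ b ≫ t.map f) : χ = cartesianLiftMap η φ f :=
  Functor.IsStronglyCartesian.map_uniq g (η.app b') (φ b') (app_comp_map_map η f) _ χ hχ

/-- The functor over `s` assembled from strongly cartesian lifts `φ b` of the components of
`η : s ⟶ t ⋙ g`. The lifts are arguments rather than chosen in the construction, so that they can
be taken to be identities where `η` is one. -/
noncomputable def cartesianLift : B ⥤ C where
  obj := K
  map f := cartesianLiftMap η φ f
  map_id b := by
    have : g.IsHomLift (s.map (𝟙 b)) (𝟙 (K b)) := by
      rw [s.map_id]
      exact IsHomLift.id (IsHomLift.domain_eq g (η.app b) (φ b))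
    exact (eq_cartesianLiftMap η φ (𝟙 b) (𝟙 (K b)) (by simp)).symm
  map_comp {b₁ b₂ b₃} f f' := by
    have : g.IsHomLift (s.map (f ≫ f')) (cartesianLiftMap η φ f ≫ cartesianLiftMap η φ f') := by
      rw [s.map_comp]
      infer_instance
    refine (eq_cartesianLiftMap η φ (f ≫ f') _ ?_).symm
    rw [Category.assoc, cartesianLiftMap_fac, ← Category.assoc, cartesianLiftMap_fac,
      Category.assoc, t.map_comp]

/-- The natural transformation over `η` whose components are the strongly cartesian lifts `φ b`. -/
noncomputable def cartesianLiftHom : cartesianLift η φ ⟶ t where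
  app := φ
  naturality _ _ f := cartesianLiftMap_fac η φ f

lemma cartesianLift_comp : cartesianLift η φ ⋙ g = s :=
  have hobj (b : B) : g.obj (K b) = s.obj b := IsHomLift.domain_eq g (η.app b) (φ b)
  CategoryTheory.Functor.ext hobj fun _ _ f =>
    IsHomLift.fac' g (s.map f) (cartesianLiftMap η φ f)

lemma exists_lift_identities_app [g.IsFibered] :
    ∃ (k : B ⥤ C) (φ : k ⟶ t), k ⋙ g = s ∧
      ∀ b, identities D (η.app b) → identities C (φ.app b) := by
  choose K φ hφ hφ_id using fun b => exists_isStronglyCartesian_identities g (η.app b)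
  exact ⟨cartesianLift η φ, cartesianLiftHom η φ, cartesianLift_comp η φ, hφ_id⟩

end CartesianLift

theorem stmt4_general {A : Type u₁} {B : Type u₂} {C : Type u₃} {D : Type u₄}
    [Category.{v₁} A] [Category.{v₂} B] [Category.{v₃} C] [Category.{v₄} D]
    (u : A ⥤ B) (F : B ⥤ A) (h : u ⋙ F = 𝟭 A)
    (η : 𝟭 B ⟶ F ⋙ u) (hη : ∀ a, identities B (η.app (u.obj a)))
    (g : C ⥤ D) [g.IsFibered]
    (r : A ⥤ C) (s : B ⥤ D) (hsq : r ⋙ g = u ⋙ s) :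
    ∃ k : B ⥤ C, u ⋙ k = r ∧ k ⋙ g = s := by
  have hFr : F ⋙ u ⋙ s = (F ⋙ r) ⋙ g := by rw [Functor.assoc, hsq]
  let θ : s ⟶ (F ⋙ r) ⋙ g := Functor.whiskerRight η s ≫ eqToHom hFr
  have hθ (a : A) : identities D (θ.app (u.obj a)) :=
    MorphismProperty.comp_mem _ _ _ (identities_map s (hη a)) (identities_eqToHom_app hFr _)
  obtain ⟨k, φ, hk, hφ⟩ := exists_lift_identities_app θ
  refine ⟨k, ?_, hk⟩
  calc
    u ⋙ k = u ⋙ F ⋙ r :=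
      functor_eq_of_identities_app (Functor.whiskerLeft u φ) fun a => hφ _ (hθ a)
    _ = r := by rw [← Functor.assoc, h, Functor.id_comp]

/-- Given a split reflection `u : A ⥤ B` (i.e. a left adjoint `F ⊣ u` whose
counit is the identity, so in particular `u ⋙ F = 𝟭 A`) and a Grothendieck fibration
`g : C ⥤ D`, every strictly commuting square `r ⋙ g = u ⋙ s` admits a strict diagonal
filler `k : B ⥤ C`. -/
theorem stmt4 {A : Type u₁} {B : Type u₂} {C : Type u₃} {D : Type u₄}
    [Category.{v₁} A] [Category.{v₂} B] [Category.{v₃} C] [Category.{v₄} D]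
    (u : A ⥤ B) (F : B ⥤ A) (adj : F ⊣ u)
    (h : u ⋙ F = 𝟭 A) (hcounit : adj.counit = eqToHom h)
    (g : C ⥤ D) [g.IsFibered]
    (r : A ⥤ C) (s : B ⥤ D) (hsq : r ⋙ g = u ⋙ s) :
    ∃ k : B ⥤ C, u ⋙ k = r ∧ k ⋙ g = s :=
  have hε (a : A) : identities A (adj.counit.app a) := hcounit ▸ identities_eqToHom_app h a
  stmt4_general u F h adj.unit (fun a => identities_unit_app_of_counit_app adj (hε a)) g r s hsq
end

section
/- Let C be a category, J a category, U : J ⥤ Arrow C a functor, and V : RLP(J,U) ⥤ Arrow C the forgetful functor. Then V creates coequalizers of V-split pairs: for every parallel pair g, h : X ⇉ Y in RLP(J,U) such that the pair V.map g, V.map h admits a split coequalizer in Arrow C, V creates the coequalizer of g and h. -/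
/-!
A retract of an arrow with lifting operations inherits lifting operations. Along a split
coequalizer `π` of `V g` and `V h` this makes `π` itself a morphism of `RLP U`: to compare lifts
of a square `sq` into `V Y`, factor it as `(sq ≫ leftSection) ≫ V h`, and trade `V h` for `V g`
after `π`. Being compatible with lifts is left cancellable along a split epimorphism, so the
factorizations through `π` in `Arrow C`, like the inverses of isomorphisms, are again morphisms of
`RLP U`.
-/

open CategoryTheory CategoryTheory.Limits

universe w₂ w₁ v₂ v₁ u₂ u₁

variable {C : Type u₁} [Category.{v₁} C] {J : Type u₂} [Category.{v₂} J]

/-- A (horizontally natural) right lifting structure on an arrow `f` of `C`, against the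
diagram of arrows `U : J ⥤ Arrow C`. -/
structure LiftingOps (U : J ⥤ Arrow C) (f : Arrow C) where
  /-- the chosen diagonal fillers -/
  lift : ∀ (j : J) (sq : U.obj j ⟶ f), (U.obj j).right ⟶ f.left
  fac_left : ∀ (j : J) (sq : U.obj j ⟶ f), (U.obj j).hom ≫ lift j sq = sq.left
  fac_right : ∀ (j : J) (sq : U.obj j ⟶ f), lift j sq ≫ f.hom = sq.right
  natural : ∀ {i j : J} (r : i ⟶ j) (sq : U.obj j ⟶ f),
    lift i (U.map r ≫ sq) = (U.map r).right ≫ lift j sq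

/-- The category `RLP(J,U)` of arrows of `C` equipped with a right lifting structure
against `U : J ⥤ Arrow C`. -/
structure RLP (U : J ⥤ Arrow C) where
  /-- the underlying arrow -/
  arr : Arrow C
  /-- the lifting structure -/
  str : LiftingOps U arr

instance {U : J ⥤ Arrow C} : Category (RLP U) where
  Hom X Y := { t : X.arr ⟶ Y.arr //
    ∀ (j : J) (sq : U.obj j ⟶ X.arr), X.str.lift j sq ≫ t.left = Y.str.lift j (sq ≫ t) }
  id X := ⟨𝟙 X.arr, by intro j sq; simp⟩
  comp {X Y Z} g h := ⟨g.1 ≫ h.1, by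
    intro j sq
    calc X.str.lift j sq ≫ (g.1 ≫ h.1).left
        = (X.str.lift j sq ≫ g.1.left) ≫ h.1.left := by simp
      _ = Y.str.lift j (sq ≫ g.1) ≫ h.1.left := by rw [g.2 j sq]
      _ = Z.str.lift j ((sq ≫ g.1) ≫ h.1) := h.2 j (sq ≫ g.1)
      _ = Z.str.lift j (sq ≫ (g.1 ≫ h.1)) := by rw [Category.assoc]⟩
  id_comp g := Subtype.ext (Category.id_comp g.1)
  comp_id g := Subtype.ext (Category.comp_id g.1)
  assoc f g h := Subtype.ext (Category.assoc f.1 g.1 h.1)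

/-- The forgetful functor `V : RLP(J,U) ⥤ Arrow C`. -/
def forgetRLP (U : J ⥤ Arrow C) : RLP U ⥤ Arrow C where
  obj X := X.arr
  map t := t.1

/-- The target of a split coequalizer as a retract of the middle object. -/
def retractOfIsSplitCoequalizer {D : Type*} [Category* D] {X Y Z : D} {g h : X ⟶ Y} {π : Y ⟶ Z}
    (q : IsSplitCoequalizer g h π) : Retract Z Y where
  i := q.rightSection
  r := π
  retract := q.rightSection_π

namespace LiftingOps

variable {U : J ⥤ Arrow C} {f f' f'' : Arrow C}

/-- Compatibility of a morphism of arrows with lifting operations on its source and target; these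
are the morphisms of `RLP U`. -/
def IsCompatible (L : LiftingOps U f) (L' : LiftingOps U f') (t : f ⟶ f') : Prop :=
  ∀ (j : J) (sq : U.obj j ⟶ f), L.lift j sq ≫ t.left = L'.lift j (sq ≫ t)

theorem IsCompatible.of_comp_left {L : LiftingOps U f} {L' : LiftingOps U f'}
    {L'' : LiftingOps U f''} {p : f ⟶ f'} {t : f' ⟶ f''} [IsSplitEpi p]
    (hpt : L.IsCompatible L'' (p ≫ t)) (hp : L.IsCompatible L' p) : L'.IsCompatible L'' t := by
  intro j sq
  obtain ⟨sq, rfl⟩ : ∃ sq' : U.obj j ⟶ f, sq' ≫ p = sq := ⟨sq ≫ section_ p, by simp⟩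
  calc L'.lift j (sq ≫ p) ≫ t.left
      = L.lift j sq ≫ (p ≫ t).left := by rw [← hp j sq, Category.assoc, Arrow.comp_left]
    _ = L''.lift j ((sq ≫ p) ≫ t) := by rw [hpt j sq, Category.assoc]

theorem isCompatible_id (L : LiftingOps U f) : L.IsCompatible L (𝟙 f) := by
  intro j sq
  simp

theorem IsCompatible.inv {L : LiftingOps U f} {L' : LiftingOps U f'} {t : f ⟶ f'} [IsIso t]
    (ht : L.IsCompatible L' t) : L'.IsCompatible L (inv t) :=
  IsCompatible.of_comp_left (by simpa only [IsIso.hom_inv_id] using L.isCompatible_id) ht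

/-- The lifting operations inherited by a retract. -/
def ofRetract (L : LiftingOps U f) (r : Retract f' f) : LiftingOps U f' where
  lift j sq := L.lift j (sq ≫ r.i) ≫ r.r.left
  fac_left j sq := by
    rw [← Category.assoc, L.fac_left, ← Arrow.comp_left, Category.assoc, r.retract,
      Category.comp_id]
  fac_right j sq := by
    rw [Category.assoc, Arrow.w r.r, ← Category.assoc, L.fac_right, ← Arrow.comp_right,
      Category.assoc, r.retract, Category.comp_id]
  natural a sq := by rw [Category.assoc, L.natural, Category.assoc]

theorem isCompatible_of_isSplitCoequalizer {L : LiftingOps U f} {L' : LiftingOps U f'}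
    {g h : f ⟶ f'} (hg : L.IsCompatible L' g) (hh : L.IsCompatible L' h)
    {π : f' ⟶ f''} (q : IsSplitCoequalizer g h π) :
    L'.IsCompatible (L'.ofRetract (retractOfIsSplitCoequalizer q)) π := by
  intro j sq
  calc L'.lift j sq ≫ π.left
      = L'.lift j ((sq ≫ q.leftSection) ≫ h) ≫ π.left := by simp
    _ = L.lift j (sq ≫ q.leftSection) ≫ (h ≫ π).left := by
        rw [← hh, Category.assoc, Arrow.comp_left]
    _ = L.lift j (sq ≫ q.leftSection) ≫ (g ≫ π).left := by rw [q.condition]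
    _ = L'.lift j ((sq ≫ q.leftSection) ≫ g) ≫ π.left := by
        rw [← hg, Category.assoc, Arrow.comp_left]
    _ = L'.lift j ((sq ≫ π) ≫ q.rightSection) ≫ π.left := by simp

end LiftingOps

namespace RLP

variable {U : J ⥤ Arrow C}

/-- The lifting operations of `X`, typed over `V X` so that compatibility makes sense for morphisms
`V X ⟶ V Y` without unfolding `V`. -/
def liftingOps (X : RLP U) : LiftingOps U ((forgetRLP U).obj X) :=
  X.str

/-- The morphism of `RLP U` given by a compatible morphism of arrows. -/
def homMk {X Y : RLP U} (t : (forgetRLP U).obj X ⟶ (forgetRLP U).obj Y)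
    (ht : X.liftingOps.IsCompatible Y.liftingOps t) : X ⟶ Y :=
  ⟨t, ht⟩

theorem isCompatible_map {X Y : RLP U} (t : X ⟶ Y) :
    X.liftingOps.IsCompatible Y.liftingOps ((forgetRLP U).map t) :=
  t.2

instance : (forgetRLP U).Faithful where
  map_injective := Subtype.ext

instance : (forgetRLP U).ReflectsIsomorphisms where
  reflects t _ :=
    ⟨homMk (inv ((forgetRLP U).map t)) (isCompatible_map t).inv,
      (forgetRLP U).map_injective (IsIso.hom_inv_id ((forgetRLP U).map t)),
      (forgetRLP U).map_injective (IsIso.inv_hom_id ((forgetRLP U).map t))⟩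

/-- The split leg is what makes the factorizations through the colimit in `Arrow C` compatible with
the lifting operations. -/
def isColimitOfMapCoconeOfIsSplitEpi {I : Type*} [Category* I] {K : I ⥤ RLP U} {c : Cocone K}
    (hc : IsColimit ((forgetRLP U).mapCocone c)) (i : I)
    [IsSplitEpi (((forgetRLP U).mapCocone c).ι.app i)] : IsColimit c :=
  IsColimit.ofFaithful (forgetRLP U) hc
    (fun s => homMk (hc.desc ((forgetRLP U).mapCocone s)) <| by
      have hs := isCompatible_map (s.ι.app i)
      rw [← Functor.mapCocone_ι_app, ← hc.fac] at hs
      exact hs.of_comp_left (isCompatible_map (c.ι.app i)))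
    (fun _ => rfl)

end RLP

/-- The forgetful functor `V : RLP(J,U) ⥤ Arrow C` creates coequalizers of
`V`-split pairs. -/
theorem stmt9 (U : J ⥤ Arrow C) {X Y : RLP U} (g h : X ⟶ Y)
    [(forgetRLP U).IsSplitPair g h] :
    Nonempty (CreatesColimit (parallelPair g h) (forgetRLP U)) := by
  obtain ⟨Z, π, ⟨q⟩⟩ := HasSplitCoequalizer.splittable
    (f := (forgetRLP U).map g) (g := (forgetRLP U).map h)
  let W : RLP U := ⟨Z, Y.liftingOps.ofRetract (retractOfIsSplitCoequalizer q)⟩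
  let p : Y ⟶ W := RLP.homMk π <|
    LiftingOps.isCompatible_of_isSplitCoequalizer (RLP.isCompatible_map g)
      (RLP.isCompatible_map h) q
  have w : g ≫ p = h ≫ p := (forgetRLP U).map_injective q.condition
  have hV : IsColimit ((forgetRLP U).mapCocone (Cofork.ofπ p w)) :=
    (isColimitMapCoconeCoforkEquiv (forgetRLP U) w).symm q.isCoequalizer
  have : IsSplitEpi (((forgetRLP U).mapCocone (Cofork.ofπ p w)).ι.app .one) :=
    ⟨⟨q.rightSection, q.rightSection_π⟩⟩
  exact ⟨createsColimitOfReflectsIso' hV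
    ⟨⟨Cofork.ofπ p w, Iso.refl _⟩, RLP.isColimitOfMapCoconeOfIsSplitEpi hV .one⟩⟩
end

section
/- Let C be a category, J a category, U : J ⥤ Arrow C a functor, and V : RLP(J,U) ⥤ Arrow C the forgetful functor. If V admits a left adjoint, then V is monadic (in the sense of Mathlib's MonadicRightAdjoint). -/
open CategoryTheory CategoryTheory.Limits

universe w₂ w₁ v₂ v₁ u₂ u₁

variable {C : Type u₁} [Category.{v₁} C] {J : Type u₂} [Category.{v₂} J]

/-!
Lifting structures descend along retractions: if `s ≫ p = 𝟙`, a square into the target of `p` is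
filled by composing with `s`, filling upstairs, and composing with `p`. Suppose `p` is a split
coequalizer of the underlying arrows of `f g : A ⟶ B` in `RLP U`, with sections `s` of `p` and `t`
of `g`. A square `sq` into `B` and its replacement `sq ≫ p ≫ s` are the images under `g` and `f`
of the single square `sq ≫ t` into `A`; as `f` and `g` preserve fillers, the chosen fillers of the
two squares agree after composing with `p`, so `p` preserves fillers.

A morphism of `RLP U` over a split epimorphism is final for the forgetful functor: a map out of its
target preserves fillers as soon as the composite does. This gives both the universal property of
`p` in `RLP U` and reflection of isomorphisms, and Beck's theorem applies.
-/

/-- The lifting structure induced on a retract `g` of an arrow `f`: a square into `g` is filled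
through the chosen filler of its image in `f`. -/
def LiftingOps.ofRetract_s10 {U : J ⥤ Arrow C} {f g : Arrow C} (σ : LiftingOps U f)
    (h : Retract g f) : LiftingOps U g where
  lift j sq := σ.lift j (sq ≫ h.i) ≫ h.r.left
  fac_left j sq := by
    have retract_left : h.i.left ≫ h.r.left = 𝟙 g.left := congrArg CommaMorphism.left h.retract
    rw [← Category.assoc, σ.fac_left, Arrow.comp_left, Category.assoc, retract_left,
      Category.comp_id]
  fac_right j sq := by
    have retract_right : h.i.right ≫ h.r.right = 𝟙 g.right :=
      congrArg CommaMorphism.right h.retract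
    rw [Category.assoc, Arrow.w h.r, ← Category.assoc, σ.fac_right, Arrow.comp_right,
      Category.assoc, retract_right, Category.comp_id]
  natural r sq := by rw [Category.assoc, σ.natural, Category.assoc]

namespace RLP

variable {U : J ⥤ Arrow C}

theorem hom_ext {X Y : RLP U} {s t : X ⟶ Y} (h : s.1 = t.1) : s = t :=
  Subtype.ext h

section SplitEpi

variable {X Y Z : RLP U} (p : X ⟶ Y) [IsSplitEpi p.1]

theorem lift_comp_left_of_isSplitEpi (k : X ⟶ Z) {m : Y.arr ⟶ Z.arr} (hm : p.1 ≫ m = k.1)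
    (j : J) (sq : U.obj j ⟶ Y.arr) : Y.str.lift j sq ≫ m.left = Z.str.lift j (sq ≫ m) := by
  obtain ⟨sq, rfl⟩ : ∃ sq' : U.obj j ⟶ X.arr, sq = sq' ≫ p.1 :=
    ⟨sq ≫ section_ p.1, by simp only [Category.assoc, IsSplitEpi.id, Category.comp_id]⟩
  calc Y.str.lift j (sq ≫ p.1) ≫ m.left
      = X.str.lift j sq ≫ (p.1 ≫ m).left := by
        rw [← p.2, Category.assoc, Arrow.comp_left]
    _ = Z.str.lift j ((sq ≫ p.1) ≫ m) := by rw [hm, k.2, Category.assoc, hm]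

/-- The morphism of `RLP U` given by a factorization `m` of the underlying arrow of `k` through
that of `p`, when the latter is a split epimorphism. -/
def homOfSplitEpi (k : X ⟶ Z) (m : Y.arr ⟶ Z.arr) (hm : p.1 ≫ m = k.1) : Y ⟶ Z :=
  ⟨m, lift_comp_left_of_isSplitEpi p k hm⟩

def isColimitOfUnderlying {W : RLP U} {f g : W ⟶ X} (w : f ≫ p = g ≫ p)
    (hp : IsColimit (Cofork.ofπ p.1 (congrArg Subtype.val w : f.1 ≫ p.1 = g.1 ≫ p.1))) :
    IsColimit (Cofork.ofπ p w) :=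
  Cofork.IsColimit.mk _
    (fun c => homOfSplitEpi p c.π
      (Cofork.IsColimit.desc hp c.π.1 (congrArg Subtype.val c.condition))
      (Cofork.IsColimit.π_desc' hp _ _))
    (fun _ => hom_ext (Cofork.IsColimit.π_desc' hp _ _))
    (fun _ _ hm => hom_ext (Cofork.IsColimit.hom_ext hp
      ((congrArg Subtype.val hm).trans (Cofork.IsColimit.π_desc' hp _ _).symm)))

end SplitEpi

instance inst_s10 : (forgetRLP U).ReflectsIsomorphisms where
  reflects {X _} t (_ : IsIso t.1) :=
    ⟨homOfSplitEpi t (𝟙 X) (inv t.1) (IsIso.hom_inv_id t.1),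
      hom_ext (IsIso.hom_inv_id t.1), hom_ext (IsIso.inv_hom_id t.1)⟩

section SplitCoequalizer

variable {A B : RLP U} {f g : A ⟶ B} {Q : Arrow C} {p : B.arr ⟶ Q}

theorem lift_comp_left_of_isSplitCoequalizer (h : IsSplitCoequalizer f.1 g.1 p)
    (j : J) (sq : U.obj j ⟶ B.arr) :
    B.str.lift j sq ≫ p.left = B.str.lift j ((sq ≫ p) ≫ h.rightSection) ≫ p.left := by
  have image_g : (sq ≫ h.leftSection) ≫ g.1 = sq := by
    rw [Category.assoc, h.leftSection_bottom, Category.comp_id]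
  have image_f : (sq ≫ h.leftSection) ≫ f.1 = (sq ≫ p) ≫ h.rightSection := by
    rw [Category.assoc, Category.assoc, h.leftSection_top]
  have condition_left : f.1.left ≫ p.left = g.1.left ≫ p.left :=
    congrArg CommaMorphism.left h.condition
  calc B.str.lift j sq ≫ p.left
      = A.str.lift j (sq ≫ h.leftSection) ≫ g.1.left ≫ p.left := by
        rw [← Category.assoc, g.2, image_g]
    _ = A.str.lift j (sq ≫ h.leftSection) ≫ f.1.left ≫ p.left := by rw [condition_left]
    _ = B.str.lift j ((sq ≫ p) ≫ h.rightSection) ≫ p.left := by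
        rw [← Category.assoc, f.2, image_f]

/-- The coequalizer in `RLP U` of a pair whose underlying pair is split: the split coequalizer of
the underlying arrows, with the lifting structure it inherits as a retract. -/
def splitCoequalizer (h : IsSplitCoequalizer f.1 g.1 p) : RLP U where
  arr := Q
  str := B.str.ofRetract_s10 ⟨h.rightSection, p, h.rightSection_π⟩

/-- The projection onto the coequalizer of a pair whose underlying pair is split. -/
def splitCoequalizerπ (h : IsSplitCoequalizer f.1 g.1 p) : B ⟶ splitCoequalizer h :=
  ⟨p, lift_comp_left_of_isSplitCoequalizer h⟩

theorem splitCoequalizer_condition (h : IsSplitCoequalizer f.1 g.1 p) :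
    f ≫ splitCoequalizerπ h = g ≫ splitCoequalizerπ h :=
  hom_ext h.condition

def splitCoequalizerIsColimit (h : IsSplitCoequalizer f.1 g.1 p) :
    IsColimit (Cofork.ofπ (splitCoequalizerπ h) (splitCoequalizer_condition h)) :=
  have : IsSplitEpi (splitCoequalizerπ h).1 := .mk' ⟨h.rightSection, h.rightSection_π⟩
  isColimitOfUnderlying _ _ h.isCoequalizer

theorem preservesColimit_of_isSplitCoequalizer (h : IsSplitCoequalizer f.1 g.1 p) :
    PreservesColimit (parallelPair f g) (forgetRLP U) :=
  preservesColimit_of_preserves_colimit_cocone (splitCoequalizerIsColimit h)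
    ((isColimitMapCoconeCoforkEquiv _ (splitCoequalizer_condition h)).symm h.isCoequalizer)

end SplitCoequalizer

instance : Monad.HasCoequalizerOfIsSplitPair (forgetRLP U) where
  out _ _ hfg :=
    let ⟨_, _, ⟨h⟩⟩ := hfg.splittable
    ⟨⟨_, splitCoequalizerIsColimit h⟩⟩

instance : Monad.PreservesColimitOfIsSplitPair (forgetRLP U) where
  out _ _ hfg :=
    let ⟨_, _, ⟨h⟩⟩ := hfg.splittable
    preservesColimit_of_isSplitCoequalizer h

end RLP

/-- If the forgetful functor `V : RLP(J,U) ⥤ Arrow C` admits a left adjoint,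
then it is monadic. -/
theorem stmt10 (U : J ⥤ Arrow C) (F : Arrow C ⥤ RLP U) (adj : F ⊣ forgetRLP U) :
    Nonempty (MonadicRightAdjoint (forgetRLP U)) :=
  ⟨Monad.monadicOfHasPreservesGSplitCoequalizersOfReflectsIsomorphisms adj⟩
end

section
/- Let C be a locally presentable category, J a small category, and U : J ⥤ Arrow C a functor. Then the forgetful functor V : RLP(J,U) ⥤ Arrow C admits a left adjoint (and is therefore monadic). -/
open CategoryTheory CategoryTheory.Limits

universe w₂ w₁ v₂ v₁ u₂ u₁

variable {C : Type u₁} [Category.{v₁} C] {J : Type u₂} [Category.{v₂} J]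

/-- A small category `I` is `κ`-filtered if every diagram in `I` indexed by a small category
with fewer than `κ` morphisms admits a cocone. -/
def IsCardinalFilteredCat (I : Cat.{v₁, v₁}) (κ : Cardinal.{v₁}) : Prop :=
  ∀ K : Cat.{v₁, v₁}, Cardinal.mk (Σ (a : K) (b : K), a ⟶ b) < κ →
    ∀ F : K ⥤ I, Nonempty (Cocone F)

/-- An object `X` of `C` is `κ`-presentable if its covariant hom functor preserves colimits
of shape `I` for every `κ`-filtered small category `I`. -/
def IsPresentableObj {C : Type u₁} [Category.{v₁} C] (κ : Cardinal.{v₁}) (X : C) : Prop :=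
  ∀ I : Cat.{v₁, v₁}, IsCardinalFilteredCat I κ →
    Nonempty (PreservesColimitsOfShape I (coyoneda.obj (Opposite.op X)))

/-- A category is locally presentable if it is cocomplete and accessible: there is a regular
cardinal `κ` and a set-indexed family of `κ`-presentable objects such that every object is a
`κ`-filtered colimit of objects of the family. -/
def LocallyPresentable (C : Type u₁) [Category.{v₁} C] : Prop :=
  HasColimits C ∧
  ∃ κ : Cardinal.{v₁}, κ.IsRegular ∧
    ∃ (ι : Type v₁) (G : ι → C),
      (∀ s : ι, IsPresentableObj κ (G s)) ∧
      ∀ X : C, ∃ (I : Cat.{v₁, v₁}) (F : I ⥤ C),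
        IsCardinalFilteredCat I κ ∧
        (∀ i : I, ∃ s : ι, Nonempty (F.obj i ≅ G s)) ∧
        ∃ t : Cocone F, Nonempty (IsColimit t) ∧ Nonempty (t.pt ≅ X)

/-! A lifting structure on `f` is a section of the map of presheaves
`δ f : (j ↦ Hom ((U j).right, f.left)) ⟶ (j ↦ Hom (U j, f))` on `J` sending a diagonal `d` to the
square `(hom ≫ d, d ≫ f.hom)`. Writing `D` for the source of `δ`, the category of arrows with a
lifting structure is therefore equivalent to the full subcategory of the comma category `(𝟭 ↓ D)`
on the `p : P ⟶ D f` for which `p ≫ δ f` is an isomorphism. Both `(P, f) ↦ P j` and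
`(P, f) ↦ Hom (U j, f)` are corepresented by presentable objects, so this subcategory is an
orthogonality class for a small set of maps between presentable objects, hence reflective; and the
projection `(P, f) ↦ f` has the left adjoint `f ↦ (⊥ ⟶ D f)`. Monadicity is then an application of
Beck's theorem: a lifting structure passes to retracts, so split coequalizers lift.
-/

section Presentability

variable {D : Type u₂} [Category.{v₂} D]

lemma exists_isCardinalAccessible_forall {ι : Type w₁} (F : ι → C ⥤ D)
    [∀ i, Functor.IsAccessible.{w₁} (F i)] :
    ∃ (κ : Cardinal.{w₁}) (_ : Fact κ.IsRegular), ∀ i, (F i).IsCardinalAccessible κ := by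
  choose κ _ hF using fun i => Functor.IsAccessible.exists_cardinal.{w₁} (F := F i)
  obtain ⟨κ', hκ', hlt⟩ := HasCardinalLT.exists_regular_cardinal_forall.{w₁}
    (fun i => (κ i).ord.ToType)
  have : Fact κ'.IsRegular := ⟨hκ'⟩
  refine ⟨κ', this, fun i => (F i).isCardinalAccessible_of_le (κ := κ i) ?_⟩
  simpa [hasCardinalLT_iff_cardinal_mk_lt] using (hlt i).le

lemma isCardinalPresentable_of_corepresentableBy {F : C ⥤ Type v₁} {X : C}
    (h : F.CorepresentableBy X) (κ : Cardinal.{w₁}) [Fact κ.IsRegular]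
    [F.IsCardinalAccessible κ] : IsCardinalPresentable X κ :=
  Functor.isCardinalAccessible_of_natIso h.toIso.symm κ

lemma isPullback_coyoneda_arrow (f : Arrow C) :
    IsPullback
      ({ app g := ↾fun t => t.left } :
        coyoneda.obj (.op f) ⟶ Arrow.leftFunc ⋙ coyoneda.obj (.op f.left))
      ({ app g := ↾fun t => t.right } :
        coyoneda.obj (.op f) ⟶ Arrow.rightFunc ⋙ coyoneda.obj (.op f.right))
      (Functor.whiskerRight Arrow.leftToRight (coyoneda.obj (.op f.left)))
      (Functor.whiskerLeft Arrow.rightFunc (coyoneda.map f.hom.op)) := by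
  refine IsPullback.of_forall_isPullback_app fun g => ?_
  rw [Types.isPullback_iff]
  refine ⟨?_, ?_, ?_⟩
  · ext t
    exact Arrow.w t
  · intro s t ⟨h1, h2⟩
    exact Arrow.hom_ext _ _ h1 h2
  · intro s t h
    exact ⟨Arrow.homMk s t h, rfl, rfl⟩

lemma isCardinalPresentable_arrow [HasColimitsOfSize.{w₁, w₁} C] (f : Arrow C) (κ : Cardinal.{w₁})
    [Fact κ.IsRegular] [IsCardinalPresentable f.left κ] [IsCardinalPresentable f.right κ] :
    IsCardinalPresentable f κ := by
  have : (Arrow.leftFunc : Arrow C ⥤ C).IsCardinalAccessible κ := ⟨fun _ => inferInstance⟩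
  have : (Arrow.rightFunc : Arrow C ⥤ C).IsCardinalAccessible κ := ⟨fun _ => inferInstance⟩
  have hp := isPullback_coyoneda_arrow f
  have (k : WalkingCospan) :
      ((cospan (Functor.whiskerRight Arrow.leftToRight (coyoneda.obj (.op f.left)))
        (Functor.whiskerLeft Arrow.rightFunc (coyoneda.map f.hom.op))).obj
          k).IsCardinalAccessible κ := by
    rcases k with _ | _ | _ <;> dsimp <;> infer_instance
  exact Functor.isCardinalAccessible_of_isLimit hp.cone hp.isLimit κ
    (hasCardinalLT_of_finite _ _ (Cardinal.IsRegular.aleph0_le Fact.out))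

instance isPresentable_arrow [HasColimitsOfSize.{w₁, w₁} C] (f : Arrow C)
    [IsPresentable.{w₁} f.left] [IsPresentable.{w₁} f.right] : IsPresentable.{w₁} f := by
  have (b : Bool) : IsPresentable.{w₁} (bif b then f.left else f.right) := by
    cases b <;> dsimp <;> infer_instance
  obtain ⟨κ, _, h⟩ := exists_isCardinalAccessible_forall.{w₁}
    (fun b : ULift.{w₁} Bool => coyoneda.obj (.op (bif b.down then f.left else f.right)))
  have : IsCardinalPresentable f.left κ := h ⟨true⟩
  have : IsCardinalPresentable f.right κ := h ⟨false⟩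
  have := isCardinalPresentable_arrow f κ
  exact isPresentable_of_isCardinalPresentable f κ

end Presentability

section LocallyPresentable

lemma mk_sigma_hom_eq_mk_arrow (K : Type v₁) [SmallCategory K] :
    Cardinal.mk (Σ (a : K) (b : K), a ⟶ b) = Cardinal.mk (Arrow K) :=
  Cardinal.mk_congr
    { toFun f := Arrow.mk f.2.2
      invFun f := ⟨f.left, f.right, f.hom⟩ }

lemma isCardinalFilteredCat_iff (I : Cat.{v₁, v₁}) (κ : Cardinal.{v₁}) [Fact κ.IsRegular] :
    IsCardinalFilteredCat I κ ↔ IsCardinalFiltered I κ := by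
  constructor
  · refine fun h => ⟨fun {A} _ F hA => h (Cat.of A) ?_ F⟩
    rwa [hasCardinalLT_iff_cardinal_mk_lt, ← mk_sigma_hom_eq_mk_arrow] at hA
  · intro _ K hK F
    refine IsCardinalFiltered.nonempty_cocone (κ := κ) F ?_
    rwa [hasCardinalLT_iff_cardinal_mk_lt, ← mk_sigma_hom_eq_mk_arrow]

lemma IsPresentableObj.isCardinalPresentable {κ : Cardinal.{v₁}} [Fact κ.IsRegular] {X : C}
    (h : IsPresentableObj κ X) : IsCardinalPresentable X κ where
  preservesColimitOfShape I _ _ :=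
    (h (Cat.of I) ((isCardinalFilteredCat_iff (Cat.of I) κ).2 ‹_›)).some

theorem LocallyPresentable.isLocallyPresentable (hC : LocallyPresentable C) :
    IsLocallyPresentable.{v₁} C := by
  obtain ⟨_, κ, hκ, ι, G, hG, hX⟩ := hC
  have : Fact κ.IsRegular := ⟨hκ⟩
  have hgen : (ObjectProperty.ofObj G).isoClosure.IsCardinalFilteredGenerator κ :=
    { le_isCardinalPresentable := by
        rw [ObjectProperty.isoClosure_le_iff, ObjectProperty.ofObj_le_iff]
        exact fun s => (hG s).isCardinalPresentable
      exists_colimitsOfShape X := by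
        obtain ⟨I, F, hI, hF, t, ⟨ht⟩, ⟨e⟩⟩ := hX X
        refine ⟨I, inferInstance, (isCardinalFilteredCat_iff I κ).1 hI,
          ObjectProperty.prop_of_iso _ e ⟨⟨⟨F, t.ι, ht⟩, fun i => ?_⟩⟩⟩
        obtain ⟨s, ⟨e⟩⟩ := hF i
        exact ⟨G s, ObjectProperty.ofObj_apply G s, ⟨e⟩⟩ }
  have := hgen.hasCardinalFilteredGenerator
  exact ⟨κ, inferInstance, { }⟩

end LocallyPresentable

section Orthogonality

variable {E : Type u₂} [Category.{v₂} E]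

lemma exists_hom_bijective_comp_iff_isIso_app {F G : E ⥤ Type v₂} {X Y : E}
    (hF : F.CorepresentableBy X) (hG : G.CorepresentableBy Y) (ε : F ⟶ G) :
    ∃ w : Y ⟶ X, ∀ Z : E, Function.Bijective (fun g : X ⟶ Z => w ≫ g) ↔ IsIso (ε.app Z) := by
  let w : Y ⟶ X := hG.homEquiv.symm (ε.app X (hF.homEquiv (𝟙 X)))
  refine ⟨w, fun Z => ?_⟩
  have h : hG.homEquiv ∘ (fun g : X ⟶ Z => w ≫ g) = ε.app Z ∘ hF.homEquiv := by
    ext g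
    simp only [Function.comp_apply]
    rw [hG.homEquiv_comp, Equiv.apply_symm_apply, hF.homEquiv_eq g, NatTrans.naturality_apply]
  rw [isIso_iff_bijective, ← hG.homEquiv.comp_bijective, h, hF.homEquiv.bijective_comp]

theorem isRightAdjoint_ι_of_isIso_app_iff [HasColimits E] {ι : Type v₂} {F G : ι → E ⥤ Type v₂}
    [∀ i, (F i).IsCorepresentable] [∀ i, (G i).IsCorepresentable]
    [∀ i, Functor.IsAccessible.{v₂} (F i)] [∀ i, Functor.IsAccessible.{v₂} (G i)]
    (ε : ∀ i, F i ⟶ G i) {P : ObjectProperty E} (hP : ∀ Z, P Z ↔ ∀ i, IsIso ((ε i).app Z)) :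
    P.ι.IsRightAdjoint := by
  choose w hw using fun i => exists_hom_bijective_comp_iff_isIso_app
    (F i).corepresentableBy (G i).corepresentableBy (ε i)
  have hlocal : (MorphismProperty.ofHoms w).isLocal = P := by
    ext Z
    simp only [hP, ← hw, MorphismProperty.isLocal_iff]
    exact ⟨fun h i => h _ ⟨i⟩, by rintro h _ _ _ ⟨i⟩; exact h i⟩
  have (x : ι ⊕ ι) : Functor.IsAccessible.{v₂} (Sum.elim F G x) := by
    cases x <;> dsimp <;> infer_instance
  obtain ⟨κ, _, hκ⟩ := exists_isCardinalAccessible_forall (Sum.elim F G)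
  rw [← hlocal]
  refine MorphismProperty.isRightAdjoint_ι_isLocal _ κ ?_
  rintro _ _ _ ⟨i⟩
  have : (F i).IsCardinalAccessible κ := hκ (.inl i)
  have : (G i).IsCardinalAccessible κ := hκ (.inr i)
  exact ⟨isCardinalPresentable_of_corepresentableBy (G i).corepresentableBy κ,
    isCardinalPresentable_of_corepresentableBy (F i).corepresentableBy κ⟩

end Orthogonality

section Comma

variable {A : Type*} {B : Type*} {T : Type*} [Category* A] [Category* B] [Category* T]
  {L : A ⥤ T} {R : B ⥤ T}

lemma isCorepresentable_comp_of_leftAdjointObjIsDefined {G : B ⥤ A} {F : A ⥤ Type*} {a : A}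
    (hF : F.CorepresentableBy a) (hG : G.leftAdjointObjIsDefined a) :
    (G ⋙ F).IsCorepresentable := by
  obtain ⟨b, ⟨e⟩⟩ := hG.has_corepresentation
  refine ⟨b, ⟨⟨e.homEquiv.trans hF.homEquiv, fun g f => ?_⟩⟩⟩
  simp [e.homEquiv_comp, hF.homEquiv_comp]

lemma leftAdjointObjIsDefined_comma_snd [HasInitial A] [PreservesColimit (Functor.empty.{0} A) L]
    (b : B) : (Comma.snd L R).leftAdjointObjIsDefined b := by
  let h : IsInitial (L.obj (⊥_ A)) := initialIsInitial.isInitialObj L _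
  let X : Comma L R := ⟨⊥_ A, b, h.to _⟩
  refine ⟨X, ⟨⟨fun {Z} => ⟨CommaMorphism.right,
    fun t => ⟨initial.to _, t, h.hom_ext _ _⟩, fun t => ?_, fun t => ?_⟩, ?_⟩⟩⟩
  · exact Comma.hom_ext _ _ (initial.hom_ext _ _) rfl
  · rfl
  · intros; rfl

instance isRightAdjoint_comma_snd [HasInitial A] [PreservesColimit (Functor.empty.{0} A) L] :
    (Comma.snd L R).IsRightAdjoint :=
  Functor.isRightAdjoint_of_leftAdjointObjIsDefined_eq_top
    (by ext b; simpa using leftAdjointObjIsDefined_comma_snd b)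

lemma leftAdjointObjIsDefined_comma_fst {a : A} (h : R.leftAdjointObjIsDefined (L.obj a)) :
    (Comma.fst L R).leftAdjointObjIsDefined a := by
  obtain ⟨b, ⟨e⟩⟩ := h.has_corepresentation
  have he {Y : B} (t : b ⟶ Y) : e.homEquiv t = e.homEquiv (𝟙 b) ≫ R.map t := e.homEquiv_eq t
  let X : Comma L R := ⟨a, b, e.homEquiv (𝟙 b)⟩
  refine ⟨X, ⟨⟨fun {Z} => ⟨CommaMorphism.left,
    fun t => ⟨t, e.homEquiv.symm (L.map t ≫ Z.hom), ?_⟩, fun t => ?_, fun t => ?_⟩, ?_⟩⟩⟩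
  · exact (e.homEquiv.apply_symm_apply _).symm.trans (he _)
  · refine Comma.hom_ext _ _ rfl ((Equiv.symm_apply_eq _).2 ?_)
    exact t.w.trans (he _).symm
  · rfl
  · intros; rfl

end Comma

section SectionLocus

/-- The locus of the objects `p : P ⟶ D e` of the comma category `(𝟭 ↓ D)` for which the composite
of `p` with `δ e : D e ⟶ N e` is an isomorphism. Up to isomorphism, such an object is an object
`e` together with a section of `δ e`. -/
def sectionLocus {E : Type*} [Category* E] {K : Type*} [Category* K] {D N : E ⥤ K} (δ : D ⟶ N) :
    ObjectProperty (Comma (𝟭 K) D) :=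
  fun Z => IsIso (Z.hom ≫ δ.app Z.right)

lemma eq_map_of_comp_section_eq {E : Type*} [Category* E] {K : Type*} [Category* K] {D N : E ⥤ K}
    {δ : D ⟶ N} {e e' : E} {p : N.obj e ⟶ D.obj e} {p' : N.obj e' ⟶ D.obj e'}
    (hp : p ≫ δ.app e = 𝟙 _) (hp' : p' ≫ δ.app e' = 𝟙 _) {l : N.obj e ⟶ N.obj e'} {t : e ⟶ e'}
    (h : l ≫ p' = p ≫ D.map t) : l = N.map t := calc
  l = (l ≫ p') ≫ δ.app e' := by rw [Category.assoc, hp', Category.comp_id]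
  _ = (p ≫ δ.app e) ≫ N.map t := by rw [h, Category.assoc, Category.assoc, δ.naturality]
  _ = N.map t := by rw [hp, Category.id_comp]

lemma isAccessible_of_preservesColimitsOfSize {A : Type*} [Category* A] {B : Type*} [Category* B]
    (F : A ⥤ B) [PreservesColimitsOfSize.{w₁, w₁} F] : Functor.IsAccessible.{w₁} F := by
  have := Cardinal.fact_isRegular_aleph0.{w₁}
  exact F.isAccessible_of_isCardinalAccessible Cardinal.aleph0.{w₁}

variable {E : Type u₂} [Category.{v₂} E] {K : Type v₂} [SmallCategory K]
  {D N : E ⥤ K ⥤ Type v₂}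

lemma isCorepresentable_comma_fst_comp_evaluation (k : K)
    [(D ⋙ (evaluation K (Type v₂)).obj k).IsCorepresentable] :
    (Comma.fst (𝟭 _) D ⋙ (evaluation K (Type v₂)).obj k).IsCorepresentable := by
  let e : ((evaluation K (Type v₂)).obj k).CorepresentableBy (coyoneda.obj (.op k)) :=
    { homEquiv := coyonedaEquiv
      homEquiv_comp _ _ := rfl }
  let h := (D ⋙ (evaluation K (Type v₂)).obj k).corepresentableBy
  exact isCorepresentable_comp_of_leftAdjointObjIsDefined e
    (leftAdjointObjIsDefined_comma_fst
      (h.ofIso (Functor.isoWhiskerLeft D e.toIso.symm)).isCorepresentable)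

variable [HasColimits E] (δ : D ⟶ N)
  [∀ k, (D ⋙ (evaluation K (Type v₂)).obj k).IsCorepresentable]
  [∀ k, (N ⋙ (evaluation K (Type v₂)).obj k).IsCorepresentable]
  [∀ k, Functor.IsAccessible.{v₂} (N ⋙ (evaluation K (Type v₂)).obj k)]

instance isRightAdjoint_ι_sectionLocus : (sectionLocus δ).ι.IsRightAdjoint := by
  have : PreservesColimitsOfSize.{v₂, v₂} (Comma.fst (𝟭 (K ⥤ Type v₂)) D) := ⟨inferInstance⟩
  have : PreservesColimitsOfSize.{v₂, v₂} (Comma.snd (𝟭 (K ⥤ Type v₂)) D) := ⟨inferInstance⟩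
  have (k : K) := isCorepresentable_comma_fst_comp_evaluation (D := D) k
  have (k : K) : (Comma.snd (𝟭 _) D ⋙ N ⋙ (evaluation K (Type v₂)).obj k).IsCorepresentable :=
    isCorepresentable_comp_of_leftAdjointObjIsDefined (Functor.corepresentableBy _)
      (leftAdjointObjIsDefined_comma_snd _)
  have (k : K) : Functor.IsAccessible.{v₂}
      (Comma.fst (𝟭 _) D ⋙ (evaluation K (Type v₂)).obj k) :=
    isAccessible_of_preservesColimitsOfSize _
  have : Functor.IsAccessible.{v₂} (Comma.snd (𝟭 (K ⥤ Type v₂)) D) :=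
    isAccessible_of_preservesColimitsOfSize _
  let ε : Comma.fst (𝟭 _) D ⟶ Comma.snd (𝟭 _) D ⋙ N :=
    Comma.natTrans _ _ ≫ Functor.whiskerLeft _ δ
  let ε' (k : K) : Comma.fst (𝟭 _) D ⋙ (evaluation K (Type v₂)).obj k ⟶
      Comma.snd (𝟭 _) D ⋙ N ⋙ (evaluation K (Type v₂)).obj k :=
    Functor.whiskerRight ε ((evaluation K (Type v₂)).obj k)
  exact isRightAdjoint_ι_of_isIso_app_iff ε' fun Z => NatTrans.isIso_iff_isIso_app (ε.app Z)

end SectionLocus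

section Squares

/-- The square `i ⟶ f` filled by a diagonal `d : i.right ⟶ f.left`. -/
@[simps]
def squareOfDiagonal {i f : Arrow C} (d : i.right ⟶ f.left) : i ⟶ f where
  left := i.hom ≫ d
  right := d ≫ f.hom
  w := Category.assoc _ _ _

lemma comp_squareOfDiagonal {i i' f : Arrow C} (r : i ⟶ i') (d : i'.right ⟶ f.left) :
    r ≫ squareOfDiagonal d = squareOfDiagonal (r.right ≫ d) := by
  ext <;> simp

lemma squareOfDiagonal_comp {i f g : Arrow C} (d : i.right ⟶ f.left) (t : f ⟶ g) :
    squareOfDiagonal d ≫ t = squareOfDiagonal (i := i) (d ≫ t.left) := by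
  ext <;> simp

variable (U : J ⥤ Arrow C)

/-- The functor sending an arrow `f` to the presheaf `j ↦ (U.obj j ⟶ f)` of commutative squares
from the diagram `U` to `f`. -/
def squares : Arrow C ⥤ Jᵒᵖ ⥤ Type v₁ :=
  yoneda ⋙ (Functor.whiskeringLeft _ _ _).obj U.op

/-- The functor sending an arrow `f` to the presheaf `j ↦ ((U.obj j).right ⟶ f.left)` of the
diagonals of squares from the diagram `U` to `f`. -/
def diagonals : Arrow C ⥤ Jᵒᵖ ⥤ Type v₁ :=
  Arrow.leftFunc ⋙ yoneda ⋙ (Functor.whiskeringLeft _ _ _).obj (U ⋙ Arrow.rightFunc).op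

/-- The natural transformation sending a diagonal to the square that it fills. -/
def boundary : diagonals U ⟶ squares U where
  app f :=
    { app j := ↾squareOfDiagonal
      naturality i j r := by
        ext d
        exact (comp_squareOfDiagonal (U.map r.unop) d).symm }
  naturality f g t := by
    ext j d
    exact (squareOfDiagonal_comp d t).symm

instance isCorepresentable_squares_comp_evaluation (j : Jᵒᵖ) :
    (squares U ⋙ (evaluation Jᵒᵖ (Type v₁)).obj j).IsCorepresentable :=
  inferInstanceAs (coyoneda.obj (.op (U.obj j.unop))).IsCorepresentable

instance isAccessible_squares_comp_evaluation (j : Jᵒᵖ) [IsPresentable.{w₁} (U.obj j.unop)] :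
    Functor.IsAccessible.{w₁} (squares U ⋙ (evaluation Jᵒᵖ (Type v₁)).obj j) :=
  inferInstanceAs (Functor.IsAccessible.{w₁} (coyoneda.obj (.op (U.obj j.unop))))

instance isCorepresentable_diagonals_comp_evaluation (j : Jᵒᵖ) :
    (diagonals U ⋙ (evaluation Jᵒᵖ (Type v₁)).obj j).IsCorepresentable := by
  let e : (diagonals U ⋙ (evaluation Jᵒᵖ (Type v₁)).obj j).CorepresentableBy
      (Arrow.mk (𝟙 (U.obj j.unop).right)) :=
    { homEquiv {f} :=
        { toFun t := t.left
          invFun d := squareOfDiagonal (i := Arrow.mk (𝟙 _)) d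
          left_inv t := by
            have := t.w
            ext <;> simp_all
          right_inv d := Category.id_comp d }
      homEquiv_comp t g := rfl }
  exact e.isCorepresentable

end Squares

section RLP

variable {U : J ⥤ Arrow C}

lemma LiftingOps.squareOfDiagonal_lift {f : Arrow C} (θ : LiftingOps U f) {j : J}
    (sq : U.obj j ⟶ f) : squareOfDiagonal (θ.lift j sq) = sq :=
  Arrow.hom_ext _ _ (θ.fac_left j sq) (θ.fac_right j sq)

/-- The section of `(boundary U).app f` given by a lifting structure on `f`. -/
def LiftingOps.toHom {f : Arrow C} (θ : LiftingOps U f) :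
    (squares U).obj f ⟶ (diagonals U).obj f where
  app j := ↾θ.lift j.unop
  naturality i j r := by
    ext sq
    exact θ.natural r.unop sq

lemma LiftingOps.toHom_comp_boundary {f : Arrow C} (θ : LiftingOps U f) :
    θ.toHom ≫ (boundary U).app f = 𝟙 _ := by
  ext j sq
  exact θ.squareOfDiagonal_lift sq

lemma squareOfDiagonal_app_of_comp_boundary {f : Arrow C}
    {s : (squares U).obj f ⟶ (diagonals U).obj f} (hs : s ≫ (boundary U).app f = 𝟙 _) {j : J}
    (sq : U.obj j ⟶ f) : squareOfDiagonal (i := U.obj j) (s.app (.op j) sq) = sq :=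
  ConcreteCategory.congr_hom (NatTrans.congr_app hs (.op j)) sq

/-- The lifting structure on `f` given by a section of `(boundary U).app f`. -/
def LiftingOps.ofHom {f : Arrow C} (s : (squares U).obj f ⟶ (diagonals U).obj f)
    (hs : s ≫ (boundary U).app f = 𝟙 _) : LiftingOps U f where
  lift j sq := s.app (.op j) sq
  fac_left _ sq := congrArg Arrow.Hom.left (squareOfDiagonal_app_of_comp_boundary hs sq)
  fac_right _ sq := congrArg Arrow.Hom.right (squareOfDiagonal_app_of_comp_boundary hs sq)
  natural r sq := ConcreteCategory.congr_hom (s.naturality r.op) sq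

lemma RLP.toHom_naturality {X Y : RLP U} (t : X ⟶ Y) :
    X.str.toHom ≫ (diagonals U).map t.1 = (squares U).map t.1 ≫ Y.str.toHom := by
  ext j sq
  exact t.2 j.unop sq

variable (U) in
/-- The functor sending an arrow with a lifting structure `θ` to `θ.toHom`, regarded as an object of
the section locus of `boundary U`. -/
def RLP.toSectionLocus : RLP U ⥤ (sectionLocus (boundary U)).FullSubcategory :=
  ObjectProperty.lift _
    { obj X := { left := (squares U).obj X.arr, right := X.arr, hom := X.str.toHom }
      map t := { left := (squares U).map t.1, right := t.1, w := (RLP.toHom_naturality t).symm }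
      map_id X := Comma.hom_ext _ _ ((squares U).map_id _) rfl
      map_comp s t := Comma.hom_ext _ _ ((squares U).map_comp _ _) rfl }
    fun X => by
      change IsIso (X.str.toHom ≫ _)
      rw [X.str.toHom_comp_boundary]
      infer_instance

instance : (RLP.toSectionLocus U).Faithful where
  map_injective h := Subtype.ext (congrArg (fun t => t.hom.right) h)

instance : (RLP.toSectionLocus U).Full where
  map_surjective {X Y} φ := by
    have hleft : φ.hom.left = (squares U).map φ.hom.right :=
      eq_map_of_comp_section_eq X.str.toHom_comp_boundary Y.str.toHom_comp_boundary φ.hom.w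
    have hw : (squares U).map φ.hom.right ≫ Y.str.toHom =
        X.str.toHom ≫ (diagonals U).map φ.hom.right := hleft ▸ φ.hom.w
    refine ⟨⟨φ.hom.right, fun j sq => ?_⟩, ?_⟩
    · exact (ConcreteCategory.congr_hom (NatTrans.congr_app hw (.op j)) sq).symm
    · ext : 1
      exact Comma.hom_ext _ _ hleft.symm rfl

instance : (RLP.toSectionLocus U).EssSurj where
  mem_essImage Z := by
    have : IsIso (Z.obj.hom ≫ (boundary U).app Z.obj.right) := Z.property
    let e := asIso (Z.obj.hom ≫ (boundary U).app Z.obj.right)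
    have hs : (e.inv ≫ Z.obj.hom) ≫ (boundary U).app Z.obj.right = 𝟙 _ := by
      rw [Category.assoc]
      exact e.inv_hom_id
    have hw : e.inv ≫ Z.obj.hom =
        (LiftingOps.ofHom _ hs).toHom ≫ (diagonals U).map (𝟙 Z.obj.right) := by
      rw [(diagonals U).map_id, Category.comp_id]
      rfl
    exact ⟨⟨Z.obj.right, .ofHom _ hs⟩,
      ⟨ObjectProperty.isoMk _ (Comma.isoMk e.symm (Iso.refl _) hw)⟩⟩

instance : (RLP.toSectionLocus U).IsEquivalence where

end RLP

instance isRightAdjoint_forgetRLP {C : Type u₁} [Category.{v₁} C] [HasColimits C]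
    {J : Type v₁} [SmallCategory J] (U : J ⥤ Arrow C) [∀ j, IsPresentable.{v₁} (U.obj j)] :
    (forgetRLP U).IsRightAdjoint :=
  inferInstanceAs
    (RLP.toSectionLocus U ⋙ (sectionLocus (boundary U)).ι ⋙ Comma.snd _ _).IsRightAdjoint

section Monadicity

variable {U : J ⥤ Arrow C}

instance reflectsIsomorphisms_forgetRLP : (forgetRLP U).ReflectsIsomorphisms where
  reflects {X Y} t ht := by
    have : IsIso t.1 := ht
    refine ⟨⟨inv t.1, fun j sq => ?_⟩, Subtype.ext (IsIso.hom_inv_id t.1),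
      Subtype.ext (IsIso.inv_hom_id t.1)⟩
    have h : X.str.lift j (sq ≫ inv t.1) ≫ t.1.left = Y.str.lift j sq := by
      simpa using t.2 j (sq ≫ inv t.1)
    rw [← h, Category.assoc, ← Arrow.comp_left, IsIso.hom_inv_id]
    exact Category.comp_id _

/-- The lifting structure induced on a retract `g` of an arrow `f` with a lifting structure. -/
def LiftingOps.retract {f g : Arrow C} (θ : LiftingOps U f) {π : f ⟶ g} {σ : g ⟶ f}
    (h : σ ≫ π = 𝟙 g) : LiftingOps U g where
  lift j sq := θ.lift j (sq ≫ σ) ≫ π.left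
  fac_left j sq := by
    rw [← Category.assoc, θ.fac_left, ← Arrow.comp_left, Category.assoc, h, Category.comp_id]
  fac_right j sq := by
    rw [Category.assoc, Arrow.w π, ← Category.assoc, θ.fac_right, ← Arrow.comp_right,
      Category.assoc, h, Category.comp_id]
  natural r sq := by rw [Category.assoc, θ.natural, Category.assoc]

variable {X Y : RLP U} {s t : X ⟶ Y} {g : Arrow C} {π : Y.arr ⟶ g}

lemma lift_comp_left_eq_of_isSplitCoequalizer (h : IsSplitCoequalizer s.1 t.1 π) {j : J}
    (sq : U.obj j ⟶ Y.arr) :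
    Y.str.lift j sq ≫ π.left = Y.str.lift j ((sq ≫ π) ≫ h.rightSection) ≫ π.left := by
  have ht : X.str.lift j (sq ≫ h.leftSection) ≫ t.1.left = Y.str.lift j sq := by
    simpa using t.2 j (sq ≫ h.leftSection)
  have hs : X.str.lift j (sq ≫ h.leftSection) ≫ s.1.left =
      Y.str.lift j ((sq ≫ π) ≫ h.rightSection) := by
    simpa using s.2 j (sq ≫ h.leftSection)
  rw [← ht, ← hs, Category.assoc, Category.assoc, ← Arrow.comp_left, ← Arrow.comp_left,
    h.condition]

/-- The cofork in `RLP U` lifting a split coequalizer of underlying arrows. -/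
def RLP.coforkOfIsSplitCoequalizer (h : IsSplitCoequalizer s.1 t.1 π) : Cofork s t :=
  Cofork.ofπ (P := ⟨g, Y.str.retract h.rightSection_π⟩)
    ⟨π, fun _ sq => lift_comp_left_eq_of_isSplitCoequalizer h sq⟩ (Subtype.ext h.condition)

/-- Split coequalizers of underlying arrows lift to coequalizers in `RLP U`. -/
def RLP.isColimitCoforkOfIsSplitCoequalizer (h : IsSplitCoequalizer s.1 t.1 π) :
    IsColimit (RLP.coforkOfIsSplitCoequalizer h) :=
  Cofork.IsColimit.mk' _ fun c => by
    have hc : s.1 ≫ c.π.1 = t.1 ≫ c.π.1 := congrArg Subtype.val c.condition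
    have hπ : π ≫ h.rightSection ≫ c.π.1 = c.π.1 := by
      rw [← Category.assoc, ← h.leftSection_top, Category.assoc, hc, ← Category.assoc,
        h.leftSection_bottom, Category.id_comp]
    have huniq (q : g ⟶ c.pt.arr) (hq : π ≫ q = c.π.1) : q = h.rightSection ≫ c.π.1 := by
      rw [← hq, ← Category.assoc, h.rightSection_π, Category.id_comp]
    refine ⟨⟨h.rightSection ≫ c.π.1, fun j (sq : U.obj j ⟶ g) => ?_⟩, Subtype.ext hπ,
      fun {m} hm => Subtype.ext (huniq m.1 (congrArg Subtype.val hm))⟩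
    calc (Y.str.lift j (sq ≫ h.rightSection) ≫ π.left) ≫ (h.rightSection ≫ c.π.1).left
        = Y.str.lift j (sq ≫ h.rightSection) ≫ c.π.1.left := by
          rw [Category.assoc, ← Arrow.comp_left, hπ]
      _ = c.pt.str.lift j (sq ≫ h.rightSection ≫ c.π.1) := by
          rw [← Category.assoc]
          exact c.π.2 j (sq ≫ h.rightSection)

lemma nonempty_monadicRightAdjoint_forgetRLP [(forgetRLP U).IsRightAdjoint] :
    Nonempty (MonadicRightAdjoint (forgetRLP U)) := by
  have : Monad.HasCoequalizerOfIsSplitPair (forgetRLP U) :=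
    ⟨fun s t hst => by
      obtain ⟨_, _, ⟨h⟩⟩ := hst.splittable
      exact ⟨⟨_, RLP.isColimitCoforkOfIsSplitCoequalizer h⟩⟩⟩
  have : Monad.PreservesColimitOfIsSplitPair (forgetRLP U) :=
    ⟨fun s t hst => by
      obtain ⟨_, _, ⟨h⟩⟩ := hst.splittable
      exact preservesColimit_of_preserves_colimit_cocone
        (RLP.isColimitCoforkOfIsSplitCoequalizer h)
        ((isColimitMapCoconeCoforkEquiv (forgetRLP U)
          (RLP.coforkOfIsSplitCoequalizer h).condition).symm h.isCoequalizer)⟩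
  exact ⟨Monad.monadicOfHasPreservesGSplitCoequalizersOfReflectsIsomorphisms
    (Adjunction.ofIsRightAdjoint (forgetRLP U))⟩

end Monadicity

theorem stmt11_general {C : Type u₁} [Category.{v₁} C] [HasColimits C]
    {J : Type v₁} [SmallCategory J] (U : J ⥤ Arrow C) [∀ j, IsPresentable.{v₁} (U.obj j)] :
    (∃ F : Arrow C ⥤ RLP U, Nonempty (F ⊣ forgetRLP U)) ∧
    Nonempty (MonadicRightAdjoint (forgetRLP U)) :=
  ⟨⟨_, ⟨Adjunction.ofIsRightAdjoint (forgetRLP U)⟩⟩, nonempty_monadicRightAdjoint_forgetRLP⟩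

/-- If `C` is locally presentable and `J` is a small category, then the
forgetful functor `V : RLP(J,U) ⥤ Arrow C` admits a left adjoint, and is therefore
monadic. -/
theorem stmt11 {C : Type u₁} [Category.{v₁} C] (hC : LocallyPresentable C)
    {J : Type v₁} [SmallCategory J] (U : J ⥤ Arrow C) :
    (∃ F : Arrow C ⥤ RLP U, Nonempty (F ⊣ forgetRLP U)) ∧
    Nonempty (MonadicRightAdjoint (forgetRLP U)) := by
  have := hC.1
  have := hC.isLocallyPresentable
  exact stmt11_general U
end
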